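/- Let A be a complex semisimple unital Banach algebra with Soc A ≠ {0}. Then the left annihilator l(Soc A) equals {0} if and only if for all a, b ∈ A the following are equivalent: (i) a = b; (ii) σ(ax) = σ(bx) for all rank one elements x ∈ A; (iii) σ(a + x) = σ(b + x) for all rank one elements x ∈ A. -/

import Mathlib

open Complex

noncomputable section

/-- The nonzero spectrum `σ'(x) = σ(x) \ {0}` of an element of a complex algebra. -/
def nzSpec {A : Type*} [Ring A] [Algebra ℂ A] (x : A) : Set ℂ :=
  spectrum ℂ x \ {0}

/-- The spectral rank of an element: `rank a = sup_{x ∈ A} #σ'(xa)`, valued in `ℕ∞`. -/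
noncomputable def srank {A : Type*} [Ring A] [Algebra ℂ A] (a : A) : ℕ∞ :=
  ⨆ x : A, (nzSpec (x * a)).encard

/-- The socle of `A`: the set of finite-rank elements. -/
def socle (A : Type*) [Ring A] [Algebra ℂ A] : Set A :=
  {a : A | srank a ≠ ⊤}

/-- `A` is (Jacobson) semisimple: its Jacobson radical is `{0}`. -/
def JacobsonSemisimple (A : Type*) [Ring A] : Prop :=
  TwoSidedIdeal.jacobson (⊥ : TwoSidedIdeal A) = ⊥

/-- `Soc A` is a minimal two-sided ideal: it is a nonzero two-sided ideal containing
no two-sided ideals other than `{0}` and itself. -/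
def SocleIsMinimalTwoSidedIdeal (A : Type*) [Ring A] [Algebra ℂ A] : Prop :=
  ∃ I : TwoSidedIdeal A, (I : Set A) = socle A ∧ I ≠ ⊥ ∧
    ∀ J : TwoSidedIdeal A, J ≤ I → J = ⊥ ∨ J = I

/-- `A` is a prime algebra: all nonzero two-sided ideals `I, J` satisfy `IJ ≠ {0}`. -/
def IsPrimeAlgebra (A : Type*) [Ring A] : Prop :=
  ∀ I J : TwoSidedIdeal A, I ≠ ⊥ → J ≠ ⊥ → ∃ x ∈ I, ∃ y ∈ J, x * y ≠ 0

/-- The left annihilator of the socle equals `{0}`. -/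
def LeftAnnSocleTrivial (A : Type*) [Ring A] [Algebra ℂ A] : Prop :=
  {x : A | ∀ y ∈ socle A, x * y = 0} = {0}

/-!
If `p` is an idempotent of rank one, the elements of the corner `pAp` have at most one nonzero
spectral value, and translating by scalars shows that they have only one spectral value at all.
Together with semisimplicity this makes `pAp` a division algebra, so `pAp = ℂp` by Gelfand–Mazur.

Suppose `l(Soc A) = {0}` and `c ≠ 0`, and choose `y ∈ Soc A` with `cy ≠ 0`. Some left multiple
`p = zcy` is an idempotent of rank one, namely the Riesz idempotent at a nonzero spectral value of a
multiple `t` of `cy` with as many nonzero spectral values as the rank allows. In place of a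
holomorphic functional calculus, take `b = f(t)` for the polynomial `f` which is the indicator of
that spectral value; then `b ^ 2 - b` is quasinilpotent, and a Catalan series corrects `b` to an
idempotent. Now `x = ypz` has rank one and `σ'(mx) = {φ(m)} \ {0}`, where `φ` is the continuous
functional with `pzmyp = φ(m)p`, and `φ(c) = 1`.

Apply this to `c = a - b`. If `σ(ax) = σ(bx)` then `φ(a) = φ(b)`. If `σ(a + κx) = σ(b + κx)` for all
`κ ≠ 0`, then `φ` agrees on the resolvents of `a` and `b`; since the difference of the resolvents
at `μ` is `μ⁻² (a - b)` to leading order as `μ → ∞`, again `φ(a) = φ(b)`. Either way `φ(c) = 0`.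
-/

section Algebra

open scoped Pointwise

variable {A : Type*} [Ring A] [Algebra ℂ A] {a p x y : A} {μ κ : ℂ}

lemma mem_nzSpec : μ ∈ nzSpec x ↔ ¬IsUnit (algebraMap ℂ A μ - x) ∧ μ ≠ 0 :=
  Iff.rfl

lemma nzSpec_mul_comm (x y : A) : nzSpec (x * y) = nzSpec (y * x) :=
  spectrum.nonzero_mul_comm x y

lemma nzSpec_smul (hκ : κ ≠ 0) (x : A) : nzSpec (κ • x) = κ • nzSpec x := by
  lift κ to ℂˣ using hκ.isUnit
  have h := spectrum.unit_smul_eq_smul x κ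
  simp only [Units.smul_def] at h
  rw [nzSpec, h, nzSpec, Set.smul_set_sdiff₀ κ.ne_zero, Set.smul_set_singleton, smul_zero]

/-- Orthogonality gives `(μ - x) * (μ - y) = μ • (μ - (x + y))`. -/
lemma nzSpec_add_of_mul_eq_zero (hxy : x * y = 0) (hyx : y * x = 0) :
    nzSpec (x + y) = nzSpec x ∪ nzSpec y := by
  have key (μ : ℂ) (hμ : μ ≠ 0) : IsUnit (algebraMap ℂ A μ - (x + y)) ↔
      IsUnit (algebraMap ℂ A μ - x) ∧ IsUnit (algebraMap ℂ A μ - y) := by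
    have hcomm : Commute (algebraMap ℂ A μ - x) (algebraMap ℂ A μ - y) := by
      have hμx := Algebra.commutes μ x
      have hμy := Algebra.commutes μ y
      simp only [commute_iff_eq, sub_mul, mul_sub, hxy, hyx, hμx, hμy]
      abel
    have hprod : (algebraMap ℂ A μ - x) * (algebraMap ℂ A μ - y) =
        algebraMap ℂ A μ * (algebraMap ℂ A μ - (x + y)) := by
      simp only [sub_mul, mul_sub, mul_add, hxy, Algebra.commutes μ x]
      abel
    have hμA : IsUnit (algebraMap ℂ A μ) := hμ.isUnit.map _
    rw [← hcomm.isUnit_mul_iff, hprod, (Algebra.commute_algebraMap_left μ _).isUnit_mul_iff,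
      and_iff_right hμA]
  ext μ
  simp only [mem_nzSpec, Set.mem_union]
  by_cases hμ : μ = 0
  · simp [hμ]
  · rw [key μ hμ]
    tauto

lemma encard_nzSpec_mul_le_srank (x a : A) : (nzSpec (x * a)).encard ≤ srank a :=
  le_iSup (fun x ↦ (nzSpec (x * a)).encard) x

lemma srank_mul_left_le (x a : A) : srank (x * a) ≤ srank a :=
  iSup_le fun y ↦ mul_assoc y x a ▸ encard_nzSpec_mul_le_srank (y * x) a

lemma srank_mul_right_le (a x : A) : srank (a * x) ≤ srank a :=
  iSup_le fun y ↦ by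
    rw [← mul_assoc, nzSpec_mul_comm, ← mul_assoc]
    exact encard_nzSpec_mul_le_srank (x * y) a

lemma srank_smul (hκ : κ ≠ 0) (a : A) : srank (κ • a) = srank a := by
  have key {κ : ℂ} (a : A) : srank (κ • a) ≤ srank a := by
    simpa [Algebra.smul_def] using srank_mul_left_le (algebraMap ℂ A κ) a
  refine (key a).antisymm ?_
  simpa [smul_smul, hκ] using key (κ := κ⁻¹) (κ • a)

lemma nzSpec_idempotent (hp : IsIdempotentElem p) (hp0 : p ≠ 0) : nzSpec p = {1} := by
  refine Set.Subset.antisymm (fun μ hμ ↦ ?_) (Set.singleton_subset_iff.2 <|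
    mem_nzSpec.2 ⟨fun h ↦ hp0 ?_, one_ne_zero⟩)
  · exact (hp.spectrum_subset ℂ hμ.1).resolve_left hμ.2
  · rw [map_one] at h
    exact h.mul_left_cancel <| by simp [sub_mul, hp.eq]

@[simp]
lemma nzSpec_zero : nzSpec (0 : A) = ∅ := by
  ext μ
  simpa [mem_nzSpec] using fun h ↦ not_imp_comm.1 (fun hμ : μ ≠ 0 ↦ hμ.isUnit.map _) h

lemma nzSpec_smul_idempotent (hp : IsIdempotentElem p) (hp0 : p ≠ 0) (κ : ℂ) :
    nzSpec (κ • p) = {κ} \ {0} := by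
  obtain rfl | hκ := eq_or_ne κ 0
  · simp
  · rw [nzSpec_smul hκ, nzSpec_idempotent hp hp0, Set.smul_set_singleton, smul_eq_mul, mul_one,
      Set.sdiff_singleton_eq_self (by simpa using hκ.symm)]

lemma ne_zero_of_srank_eq_one (ha : srank a = 1) : a ≠ 0 := by
  rintro rfl
  simp [srank] at ha

lemma JacobsonSemisimple.exists_nzSpec_mul_nonempty (hA : JacobsonSemisimple A) (hx : x ≠ 0) :
    ∃ y : A, (nzSpec (y * x)).Nonempty := by
  by_contra! hempty
  have hmem : x ∈ TwoSidedIdeal.jacobson (⊥ : TwoSidedIdeal A) := by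
    refine TwoSidedIdeal.mem_jacobson_iff.2 fun y ↦ ?_
    have hunit : IsUnit (algebraMap ℂ A (-1) - y * x) := by
      by_contra h
      exact Set.notMem_empty (-1) (hempty y ▸ mem_nzSpec.2 ⟨h, by simp⟩)
    obtain ⟨z, hz⟩ := hunit.exists_left_inv
    refine ⟨-z, (TwoSidedIdeal.mem_bot A).2 ?_⟩
    rw [← hz, map_neg, map_one]
    noncomm_ring
  rw [hA] at hmem
  exact hx ((TwoSidedIdeal.mem_bot A).1 hmem)

end Algebra

section Corner

variable {A : Type*} [Ring A] {p : A} (hp : IsIdempotentElem p)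

/-- The inclusion of the corner `p * A * p` into `A`, which is multiplicative but sends the
identity of the corner to `p`. -/
def cornerVal : hp.Corner →ₙ+* A where
  toFun := Subtype.val
  map_mul' _ _ := rfl
  map_zero' := rfl
  map_add' _ _ := rfl

/-- The compression `x ↦ p * x * p` of an algebra onto its corner at the idempotent `p`. -/
def compress (x : A) : hp.Corner :=
  ⟨p * x * p, x, rfl⟩

@[simp]
lemma cornerVal_compress (x : A) : cornerVal hp (compress hp x) = p * x * p :=
  rfl

@[simp]
lemma cornerVal_one : cornerVal hp 1 = p :=
  rfl

lemma cornerVal_injective : Function.Injective (cornerVal hp) :=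
  Subtype.val_injective

variable {hp}

@[simp]
lemma mul_cornerVal (x : hp.Corner) : p * cornerVal hp x = cornerVal hp x :=
  ((Subsemigroup.mem_corner_iff hp).1 x.2).1

@[simp]
lemma cornerVal_mul (x : hp.Corner) : cornerVal hp x * p = cornerVal hp x :=
  ((Subsemigroup.mem_corner_iff hp).1 x.2).2

variable {R : Type*} [CommRing R] [Algebra R A]

instance : Algebra R hp.Corner :=
  letI : SMul R hp.Corner := ⟨fun r x ↦ compress hp (r • cornerVal hp x)⟩
  have smul_def (r : R) (x : hp.Corner) : cornerVal hp (r • x) = r • cornerVal hp x := by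
    change cornerVal hp (compress hp _) = _
    simp
  letI : Module R hp.Corner := Function.Injective.module R
    (cornerVal hp : hp.Corner →+ A) (cornerVal_injective hp) smul_def
  Algebra.ofModule (fun r x y ↦ cornerVal_injective hp <| by simp [smul_def])
    fun r x y ↦ cornerVal_injective hp <| by simp [smul_def]

@[simp]
lemma cornerVal_smul (r : R) (x : hp.Corner) : cornerVal hp (r • x) = r • cornerVal hp x := by
  change cornerVal hp (compress hp _) = _
  simp

lemma cornerVal_algebraMap (r : R) : cornerVal hp (algebraMap R hp.Corner r) = r • p := by
  simp [Algebra.algebraMap_eq_smul_one]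

/-- Relative to `1 = p + (1 - p)`, the element `r - x` is block diagonal with blocks `r • p - x`
and `r • (1 - p)`. -/
lemma isUnit_algebraMap_sub_cornerVal_iff {r : R} (hr : IsUnit r) (x : hp.Corner) :
    IsUnit (algebraMap R A r - cornerVal hp x) ↔ IsUnit (algebraMap R hp.Corner r - x) := by
  set a := algebraMap R A r - cornerVal hp x with ha
  have hpa : p * a = cornerVal hp (algebraMap R hp.Corner r - x) := by
    simp [ha, mul_sub, cornerVal_algebraMap, Algebra.smul_def, Algebra.commutes]
  have hap : a * p = cornerVal hp (algebraMap R hp.Corner r - x) := by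
    simp [ha, sub_mul, cornerVal_algebraMap, Algebra.smul_def]
  constructor <;> intro h
  · obtain ⟨u, hau, hua⟩ := isUnit_iff_exists.1 h
    refine isUnit_iff_exists.2 ⟨compress hp u, ?_, ?_⟩ <;> apply cornerVal_injective hp
    · rw [map_mul, cornerVal_compress, ← mul_assoc, ← mul_assoc, cornerVal_mul, ← hpa,
        mul_assoc p, hau, mul_one, hp.eq, cornerVal_one]
    · rw [map_mul, cornerVal_compress, mul_assoc, mul_cornerVal, ← hap, mul_assoc,
        ← mul_assoc u, hua, one_mul, hp.eq, cornerVal_one]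
  · obtain ⟨s, hrs⟩ := hr.exists_right_inv
    obtain ⟨y, hxy, hyx⟩ := isUnit_iff_exists.1 h
    apply_fun cornerVal hp at hxy hyx
    rw [map_mul, cornerVal_one] at hxy hyx
    have haq : a * (s • (1 - p)) = 1 - p := by
      rw [mul_smul_comm, ha, sub_mul, mul_one_sub (cornerVal hp x), cornerVal_mul, sub_self,
        sub_zero, ← Algebra.smul_def, smul_smul, mul_comm s, hrs, one_smul]
    have hqa : s • (1 - p) * a = 1 - p := by
      rw [smul_mul_assoc, ha, mul_sub, one_sub_mul p (cornerVal hp x), mul_cornerVal, sub_self,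
        sub_zero, ← Algebra.commutes, ← Algebra.smul_def, smul_smul, mul_comm s, hrs, one_smul]
    refine isUnit_iff_exists.2 ⟨cornerVal hp y + s • (1 - p), ?_, ?_⟩
    · rw [mul_add, haq, ← mul_cornerVal y, ← mul_assoc, hap, hxy, add_sub_cancel]
    · rw [add_mul, hqa, ← cornerVal_mul y, mul_assoc, hpa, hyx, add_sub_cancel]

lemma nzSpec_cornerVal [Algebra ℂ A] (x : hp.Corner) : nzSpec (cornerVal hp x) = nzSpec x := by
  ext μ
  refine and_congr_left fun hμ ↦ not_congr ?_
  exact isUnit_algebraMap_sub_cornerVal_iff (IsUnit.mk0 μ hμ) x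

end Corner

section NormedCorner

variable {A : Type*} [NormedRing A] {p : A} (hp : IsIdempotentElem p)

instance : NormedRing hp.Corner :=
  NormedRing.induced hp.Corner A (cornerVal hp) (cornerVal_injective hp)

variable {hp}

lemma isometry_cornerVal : Isometry (cornerVal hp) :=
  fun _ _ ↦ rfl

instance {𝕜 : Type*} [NormedField 𝕜] [NormedAlgebra 𝕜 A] : NormedAlgebra 𝕜 hp.Corner where
  norm_smul_le r x := by
    change ‖cornerVal hp (r • x)‖ ≤ ‖r‖ * ‖cornerVal hp x‖
    simpa using norm_smul_le r (cornerVal hp x)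

instance [CompleteSpace A] : CompleteSpace hp.Corner := by
  refine (completeSpace_iff_isComplete_range isometry_cornerVal.isUniformInducing).2
    (IsClosed.isComplete ?_)
  have hrange : Set.range (cornerVal hp) = {x | p * x * p = x} :=
    Set.ext fun x ↦ ⟨fun ⟨y, hy⟩ ↦ by simp [← hy], fun hx ↦ ⟨compress hp x, hx⟩⟩
  rw [hrange]
  exact isClosed_eq (by fun_prop) continuous_id

end NormedCorner

section Idempotents

lemma exists_eq_one_add_mul_sq {A : Type*} [NormedRing A] [CompleteSpace A] {x : A}
    (hx : Summable fun n ↦ 4 ^ n * ‖x ^ n‖) :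
    ∃ t : A, t = 1 + x * t ^ 2 ∧ ∀ y, Commute y x → Commute y t := by
  let f (n : ℕ) : A := catalan n • x ^ n
  have hf : Summable (‖f ·‖) := by
    refine hx.of_nonneg_of_le (fun n ↦ norm_nonneg _) fun n ↦ norm_nsmul_le.trans ?_
    have : catalan n ≤ 4 ^ n := by
      rw [catalan_eq_centralBinom_div]
      exact (Nat.div_le_self _ _).trans n.centralBinom_le_four_pow
    gcongr
    exact_mod_cast this
  have hsucc (n : ℕ) :
      f (n + 1) = x * ∑ ij ∈ Finset.HasAntidiagonal.antidiagonal n, f ij.1 * f ij.2 := by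
    rw [Finset.mul_sum]
    simp only [f, catalan_succ', Finset.sum_smul]
    refine Finset.sum_congr rfl fun ij hij ↦ ?_
    rw [smul_mul_smul_comm, ← pow_add, Finset.HasAntidiagonal.mem_antidiagonal.1 hij,
      mul_smul_comm, pow_succ']
  refine ⟨∑' n, f n, ?_, fun y hy ↦ Commute.tsum_right y fun n ↦ (hy.pow_right n).smul_right _⟩
  have hprod := (summable_norm_sum_mul_antidiagonal_of_summable_norm hf hf).of_norm
  rw [sq, tsum_mul_tsum_eq_tsum_sum_antidiagonal_of_summable_norm hf hf, ← hprod.tsum_mul_left,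
    hf.of_norm.tsum_eq_zero_add]
  simp only [hsucc]
  simp [f]

variable {A : Type*} [NormedRing A] [NormedAlgebra ℂ A] [CompleteSpace A]

lemma eventually_norm_pow_le_pow {a : A} {r : ℝ} (ha : spectralRadius ℂ a < ENNReal.ofReal r) :
    ∀ᶠ n : ℕ in Filter.atTop, ‖a ^ n‖ ≤ r ^ n := by
  have hr : 0 < r := ENNReal.ofReal_pos.1 (bot_le.trans_lt ha)
  have hlim := spectrum.pow_norm_pow_one_div_tendsto_nhds_spectralRadius a
  filter_upwards [hlim.eventually_lt_const ha, Filter.eventually_ne_atTop 0] with n hn hn0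
  rw [ENNReal.ofReal_lt_ofReal_iff hr] at hn
  simpa [← Real.rpow_natCast, ← Real.rpow_mul (norm_nonneg (a ^ n)), hn0] using
    pow_le_pow_left₀ (by positivity) hn.le n

lemma summable_pow_mul_norm_mul_pow {a y : A} (ha : spectralRadius ℂ a = 0) (hy : Commute y a)
    (r : ℝ) : Summable fun n ↦ r ^ n * ‖(y * a) ^ n‖ := by
  set s := |r| * ‖y‖
  have hs : 0 < (2 * s + 1)⁻¹ := by positivity
  refine .of_norm_bounded_eventually_nat summable_geometric_two ?_
  filter_upwards [eventually_norm_pow_le_pow (ha.trans_lt (ENNReal.ofReal_pos.2 hs)),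
    Filter.eventually_gt_atTop 0] with n hn hn0
  calc ‖r ^ n * ‖(y * a) ^ n‖‖ = |r| ^ n * ‖y ^ n * a ^ n‖ := by simp [hy.mul_pow]
    _ ≤ |r| ^ n * (‖y‖ ^ n * ((2 * s + 1)⁻¹) ^ n) := by
        gcongr
        exact (norm_mul_le _ _).trans (by gcongr; exact norm_pow_le' y hn0)
    _ = (s / (2 * s + 1)) ^ n := by rw [← mul_pow, ← mul_pow, ← mul_assoc, div_eq_mul_inv]
    _ ≤ (1 / 2) ^ n := by
        refine pow_le_pow_left₀ (by positivity) ?_ n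
        rw [div_le_iff₀ (by positivity)]
        linarith

lemma spectralRadius_sq_sub_self_eq_zero {A : Type*} [NormedRing A] [NormedAlgebra ℂ A] {b : A}
    (hb : spectrum ℂ b ⊆ {0, 1}) : spectralRadius ℂ (b ^ 2 - b) = 0 := by
  have hdeg : 0 < (.X ^ 2 - .X : Polynomial ℂ).degree := by
    rw [show (.X ^ 2 - .X : Polynomial ℂ).degree = 2 by compute_degree!]
    simp
  have hmap := spectrum.map_polynomial_aeval_of_degree_pos b _ hdeg
  simp only [map_sub, map_pow, Polynomial.aeval_X] at hmap
  simp only [spectralRadius, hmap, ENNReal.iSup_eq_zero]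
  rintro _ ⟨μ, hμ, rfl⟩
  obtain rfl | rfl := hb hμ <;> simp

/-- The element `b + (1 - 2 * b) * w` is idempotent exactly when `w = x + w ^ 2`, where
`x = v ^ 2 * (b ^ 2 - b)`. Here `w = x * t` with `t` the Catalan series at `x`. -/
lemma isIdempotentElem_add_mul {A : Type*} [Ring A] {b v t : A} (hbv : Commute b v)
    (hbt : Commute b t) (hvt : Commute v t) (hv : (1 - 2 * b) * v = 1)
    (ht : t = 1 + v ^ 2 * (b ^ 2 - b) * t ^ 2) : IsIdempotentElem (b + (b ^ 2 - b) * (v * t)) := by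
  set e := b ^ 2 - b with he
  have hcomme {y : A} (hy : Commute b y) : Commute e y := (hy.pow_left 2).sub_left hy
  have hew : Commute e (v * t) := hcomme (hbv.mul_right hbt)
  have hbw : Commute b (e * (v * t)) :=
    (hcomme (.refl b)).symm.mul_right (hbv.mul_right hbt)
  have hsq : (e * (v * t)) ^ 2 = e * t - e := by
    calc (e * (v * t)) ^ 2 = e * (v ^ 2 * e * t ^ 2) := by
          rw [hew.mul_pow, hvt.mul_pow, ((hcomme hbv).symm.pow_left 2).eq, sq e, mul_assoc,
            mul_assoc]
      _ = e * t - e := by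
          rw [eq_sub_iff_add_eq, ← mul_add_one, add_comm, ← ht]
  have hcross : 2 * b * (e * (v * t)) = e * (v * t) - e * t := by
    have : (1 - 2 * b) * (e * (v * t)) = e * t := by
      rw [(hcomme hbv).left_comm t, ← mul_assoc, hv, one_mul]
    rw [← this]
    noncomm_ring
  calc (b + e * (v * t)) * (b + e * (v * t))
      = b ^ 2 + (b * (e * (v * t)) + e * (v * t) * b) + (e * (v * t)) ^ 2 := by
        simp only [sq, add_mul, mul_add]
        abel
    _ = b ^ 2 + 2 * b * (e * (v * t)) + (e * (v * t)) ^ 2 := by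
        rw [← hbw.eq, two_mul, add_mul]
    _ = b + e * (v * t) := by
        rw [hsq, hcross, he]
        abel

lemma isUnit_one_sub_of_mul_eq_zero {A : Type*} [Ring A] {b w : A} (hbw : Commute b w)
    (h : b * (1 + (b - 1) * w) = 0) : IsUnit (1 - b) := by
  have hinv : (1 - b) * (1 + b * w) = 1 := by
    calc (1 - b) * (1 + b * w) = 1 - b * (1 + (b - 1) * w) := by noncomm_ring
      _ = 1 := by rw [h, sub_zero]
  have hcomm : Commute (1 - b) (1 + b * w) :=
    have hb : Commute b (1 + b * w) :=
      (Commute.one_right b).add_right ((Commute.refl b).mul_right hbw)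
    (Commute.one_left _).sub_left hb
  exact isUnit_iff_exists.2 ⟨_, hinv, hcomm.eq ▸ hinv⟩

lemma isUnit_one_sub_two_mul {A : Type*} [Ring A] [Algebra ℂ A] {b : A}
    (hb : spectrum ℂ b ⊆ {0, 1}) : IsUnit (1 - 2 * b) := by
  have hhalf : (1 / 2 : ℂ) ∉ spectrum ℂ b := fun h ↦ by
    rcases hb h with h | h <;> norm_num at h
  have htwo : IsUnit (algebraMap ℂ A 2) := two_ne_zero.isUnit.map _
  convert htwo.mul (spectrum.notMem_iff.1 hhalf) using 1
  rw [mul_sub, ← map_mul, map_ofNat]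
  simp

lemma exists_isIdempotentElem_mul_of_spectrum_subset {b : A} (hb : spectrum ℂ b ⊆ {0, 1})
    (hb1 : 1 ∈ spectrum ℂ b) :
    ∃ q : A, IsIdempotentElem (b * q) ∧ b * q ≠ 0 ∧ ∀ y, Commute y b → Commute y q := by
  set e := b ^ 2 - b with he
  obtain ⟨u, hu⟩ := isUnit_one_sub_two_mul hb
  have hcomme (y : A) (hy : Commute y b) : Commute y e := (hy.pow_right 2).sub_right hy
  have hcommv (y : A) (hy : Commute y b) : Commute y (↑u⁻¹ : A) :=
    Commute.units_inv_right <| hu ▸ (Commute.one_right y).sub_right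
      ((Commute.ofNat_right y 2).mul_right hy)
  set v : A := ↑u⁻¹
  have hve : Commute v e := hcomme v (hcommv b (.refl b)).symm
  have hx : Summable fun n ↦ 4 ^ n * ‖(v ^ 2 * e) ^ n‖ :=
    summable_pow_mul_norm_mul_pow (spectralRadius_sq_sub_self_eq_zero hb) (hve.pow_left 2) 4
  obtain ⟨t, ht, hcommt⟩ := exists_eq_one_add_mul_sq hx
  have hcommt' (y : A) (hy : Commute y b) : Commute y t :=
    hcommt y (((hcommv y hy).pow_right 2).mul_right (hcomme y hy))
  have hbv := hcommv b (.refl b)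
  have hvt (y : A) (hy : Commute y b) : Commute y (v * t) :=
    (hcommv y hy).mul_right (hcommt' y hy)
  have hmul : b * (1 + (b - 1) * (v * t)) = b + e * (v * t) := by
    rw [he]
    noncomm_ring
  refine ⟨1 + (b - 1) * (v * t), ?_, fun h0 ↦ hb1 ?_, fun y hy ↦ ?_⟩
  · rw [hmul]
    exact isIdempotentElem_add_mul hbv (hcommt' b (.refl b)) (hcommt' v hbv.symm)
      (hu ▸ u.mul_inv) ht
  · rw [spectrum.mem_resolventSet_iff, map_one]
    exact isUnit_one_sub_of_mul_eq_zero (hvt b (.refl b)) h0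
  · exact (Commute.one_right y).add_right ((hy.sub_right (.one_right y)).mul_right (hvt y hy))

end Idempotents

section Riesz

lemma notMem_nzSpec_mul_of_mul_eq {A : Type*} [Ring A] [Algebra ℂ A] {p t k : A} {μ : ℂ}
    (hp : IsIdempotentElem p) (hpt : Commute p t) (hk : (algebraMap ℂ A μ - t) * k = p)
    (hk' : k * (algebraMap ℂ A μ - t) = p) : μ ∉ nzSpec (t * p) := by
  set a := algebraMap ℂ A μ - t with ha
  have hpa : Commute p a := (Algebra.commute_algebraMap_right μ p).sub_right hpt
  have ht : t * p = cornerVal hp (compress hp t) := by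
    rw [cornerVal_compress, hpt.eq, mul_assoc, hp.eq]
  have hcorner : cornerVal hp (algebraMap ℂ hp.Corner μ - compress hp t) = p * a := by
    rw [map_sub, ← ht, cornerVal_algebraMap, ← hpt.eq, ha, mul_sub, Algebra.smul_def,
      Algebra.commutes]
  rw [ht, nzSpec_cornerVal, mem_nzSpec, not_and_or, not_not]
  refine .inl <| isUnit_iff_exists.2 ⟨compress hp k, ?_, ?_⟩ <;> apply cornerVal_injective hp <;>
    rw [map_mul, cornerVal_compress, hcorner, cornerVal_one]
  · calc p * a * (p * k * p) = a * (p * p) * k * p := by simp only [hpa.eq, mul_assoc]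
      _ = p * (a * k) * p := by rw [hp.eq, ← hpa.eq, mul_assoc p]
      _ = p := by rw [hk, hp.eq, hp.eq]
  · calc p * k * p * (p * a) = p * k * (p * p * a) := by simp only [mul_assoc]
      _ = p * (k * a) * p := by rw [hp.eq, hpa.eq]; simp only [mul_assoc]
      _ = p := by rw [hk', hp.eq, hp.eq]

lemma nzSpec_eq_union_of_commute {A : Type*} [Ring A] [Algebra ℂ A] {p t : A}
    (hp : IsIdempotentElem p) (hpt : Commute p t) :
    nzSpec t = nzSpec (t * p) ∪ nzSpec (t * (1 - p)) := by
  have hpq : p * (t * (1 - p)) = 0 := by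
    rw [← mul_assoc, hpt.eq, mul_assoc, hp.mul_one_sub_self, mul_zero]
  have hqp : (1 - p) * (t * p) = 0 := by
    rw [← hpt.eq, ← mul_assoc, hp.one_sub_mul_self, zero_mul]
  rw [← nzSpec_add_of_mul_eq_zero (by rw [mul_assoc, hpq, mul_zero])
    (by rw [mul_assoc, hqp, mul_zero]), ← mul_add, add_sub_cancel, mul_one]

open Polynomial in
lemma exists_mul_sub_algebraMap_eq_aeval_mul {R A : Type*} [CommRing R] [Ring A] [Algebra R A]
    {t q : A} {f : R[X]} {μ : R} (hf : f.IsRoot μ) (hqt : Commute q t) :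
    ∃ k, k * (t - algebraMap R A μ) = aeval t f * q ∧ Commute k t := by
  obtain ⟨g, hg⟩ := dvd_iff_isRoot.2 hf
  have hgt : Commute (aeval t g) t := by simpa using! (Commute.all g X).map (aeval t)
  have hkt : Commute (aeval t g * q) t := hgt.mul_left hqt
  refine ⟨aeval t g * q, ?_, hkt⟩
  rw [(hkt.sub_right (Algebra.commute_algebraMap_right μ _)).eq, hg, map_mul, map_sub, aeval_X,
    aeval_C, mul_assoc]

variable {A : Type*} [NormedRing A] [NormedAlgebra ℂ A] [CompleteSpace A]

open Polynomial in
/-- The idempotent is a multiple of `f(t)`, where `f` is the indicator polynomial of `ν` on the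
points of `{0} ∪ σ(t)`. -/
lemma exists_isIdempotentElem_nzSpec_mul_subset {t : A} (ht : (spectrum ℂ t).Finite) {ν : ℂ}
    (hν : ν ∈ nzSpec t) :
    ∃ p : A, IsIdempotentElem p ∧ p ≠ 0 ∧ Commute p t ∧ (∃ s, p = s * t) ∧
      nzSpec (t * p) ⊆ {ν} := by
  set f : ℂ[X] := Lagrange.basis (insert 0 ht.toFinset) id ν
  have hfν : f.eval ν = 1 := Lagrange.eval_basis_self Function.injective_id.injOn (by simp [hν.1])
  have hf {μ : ℂ} (hμ : μ = 0 ∨ μ ∈ spectrum ℂ t) (hne : ν ≠ μ) : f.IsRoot μ :=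
    Lagrange.eval_basis_of_ne (v := id) hne (by simpa using hμ)
  set b := aeval t f
  have hspec : spectrum ℂ b = (f.eval ·) '' spectrum ℂ t :=
    spectrum.map_polynomial_aeval_of_nonempty t f ⟨ν, hν.1⟩
  have hb : spectrum ℂ b ⊆ {0, 1} := by
    rw [hspec]
    rintro _ ⟨μ, hμ, rfl⟩
    obtain rfl | hne := eq_or_ne ν μ
    · exact .inr hfν
    · exact .inl (hf (.inr hμ) hne)
  have htb : Commute t b := by simpa using! (Commute.all X f).map (aeval t)
  obtain ⟨q, hp, hp0, hq⟩ := exists_isIdempotentElem_mul_of_spectrum_subset hb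
    (hspec ▸ ⟨ν, hν.1, hfν⟩)
  have hfactor {μ : ℂ} (hμ : f.IsRoot μ) :=
    exists_mul_sub_algebraMap_eq_aeval_mul hμ (hq t htb).symm
  have hpt : Commute (b * q) t := (htb.mul_right (hq t htb)).symm
  refine ⟨b * q, hp, hp0, hpt, ?_, fun μ hμ ↦ by_contra fun hne ↦ ?_⟩
  · obtain ⟨k, hk, -⟩ := hfactor (hf (.inl rfl) hν.2)
    exact ⟨k, by simpa using hk.symm⟩
  · have hμt : μ ∈ nzSpec t := nzSpec_eq_union_of_commute hp hpt ▸ .inl hμ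
    obtain ⟨k, hk, hkt⟩ := hfactor (hf (.inr hμt.1) (Ne.symm hne))
    have hkμ : -k * (algebraMap ℂ A μ - t) = b * q := by rw [neg_mul, ← mul_neg, neg_sub, hk]
    refine notMem_nzSpec_mul_of_mul_eq hp hpt ?_ hkμ hμ
    rwa [← ((Algebra.commute_algebraMap_right μ _).sub_right hkt.neg_left).eq]

end Riesz

section RankOneIdempotents

open scoped Pointwise

lemma exists_disjoint_smul {K : Type*} [Field K] [Infinite K] {S F : Set K} (hS : S.Finite)
    (hF : F.Finite) (h0 : 0 ∉ S) : ∃ κ : K, κ ≠ 0 ∧ Disjoint (κ • S) F := by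
  obtain ⟨κ, hκ⟩ := ((hF.div hS).insert 0).exists_notMem
  rw [Set.mem_insert_iff, not_or] at hκ
  refine ⟨κ, hκ.1, Set.disjoint_left.2 ?_⟩
  rintro _ ⟨s, hs, rfl⟩ hκs
  exact hκ.2 ⟨_, hκs, s, hs, mul_div_cancel_right₀ κ (ne_of_mem_of_not_mem hs h0)⟩

lemma exists_encard_nzSpec_eq_srank {A : Type*} [Ring A] [Algebra ℂ A] {y : A} (hy : y ∈ socle A) :
    ∃ x : A, (nzSpec (x * y)).encard = srank y :=
  ENat.exists_eq_iSup_of_lt_top (lt_top_iff_ne_top.2 hy)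

/-- If `p * w * p` had two nonzero spectral values, then `κ • (p * w * p) + x * y * (1 - p)`, for
suitable `κ`, would be a multiple of `y` with more nonzero spectral values than `srank y`. -/
lemma srank_le_one_of_nzSpec_mul_subset {A : Type*} [Ring A] [Algebra ℂ A] {x y p s : A} {ν : ℂ}
    (hy : y ∈ socle A) (hxy : (nzSpec (x * y)).encard = srank y) (hp : IsIdempotentElem p)
    (hpt : Commute p (x * y)) (hps : p = s * (x * y)) (hν : nzSpec (x * y * p) ⊆ {ν}) :
    srank p ≤ 1 := by
  refine iSup_le fun w ↦ ?_
  set t := x * y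
  set S := nzSpec (p * w * p)
  set F := nzSpec (t * (1 - p))
  have hS : nzSpec (w * p) = S := by
    rw [nzSpec_mul_comm w p, ← hp.eq, mul_assoc p, nzSpec_mul_comm p]
  have hfin (r : A) : (nzSpec (r * y)).Finite :=
    Set.finite_of_encard_le_coe
      ((encard_nzSpec_mul_le_srank r y).trans (ENat.natCast_toNat hy).ge)
  have hSy : p * w * p = p * w * s * x * y := by simp only [hps, t, mul_assoc]
  have hFy : t * (1 - p) = (1 - p) * x * y := by
    rw [((Commute.one_right t).sub_right hpt.symm).eq, mul_assoc]
  obtain ⟨κ, hκ, hdisj⟩ := exists_disjoint_smul (S := S) (F := F) (by simpa [S, hSy] using hfin _)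
    (by simpa [F, hFy] using hfin _) (by simp [S, nzSpec])
  have hunion : nzSpec (κ • (p * w * p) + t * (1 - p)) = κ • S ∪ F := by
    rw [nzSpec_add_of_mul_eq_zero, nzSpec_smul hκ]
    · rw [smul_mul_assoc, mul_assoc, ← mul_assoc p t, hpt.eq, mul_assoc t, hp.mul_one_sub_self,
        mul_zero, mul_zero, smul_zero]
    · rw [mul_smul_comm, mul_assoc t, ← mul_assoc _ _ p, ← mul_assoc _ p w, hp.one_sub_mul_self,
        zero_mul, zero_mul, mul_zero, smul_zero]
  have hle : S.encard + F.encard ≤ 1 + F.encard := by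
    calc S.encard + F.encard = (κ • S ∪ F).encard := by
          rw [Set.encard_union_eq hdisj, ← Set.image_smul,
            (smul_right_injective ℂ hκ).encard_image S]
      _ ≤ srank y := by
          rw [← hunion, hSy, hFy, Algebra.smul_def, ← mul_assoc, ← add_mul]
          exact encard_nzSpec_mul_le_srank _ y
      _ = (nzSpec (t * p) ∪ F).encard := by rw [← hxy, nzSpec_eq_union_of_commute hp hpt]
      _ ≤ 1 + F.encard := (Set.encard_union_le _ _).trans <| by
          gcongr
          exact (Set.encard_le_encard hν).trans_eq (Set.encard_singleton ν)
  rw [hS]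
  exact (ENat.add_le_add_iff_right (by simpa [F, hFy] using hfin _)).1 hle

variable {A : Type*} [NormedRing A] [NormedAlgebra ℂ A] [CompleteSpace A]

lemma JacobsonSemisimple.exists_isIdempotentElem_srank_eq_one (hA : JacobsonSemisimple A) {y : A}
    (hy : y ∈ socle A) (hy0 : y ≠ 0) : ∃ z : A, IsIdempotentElem (z * y) ∧ srank (z * y) = 1 := by
  obtain ⟨x, hx⟩ := exists_encard_nzSpec_eq_srank hy
  have hfin : (nzSpec (x * y)).Finite := by
    rw [← Set.encard_ne_top_iff, hx]
    exact hy
  obtain ⟨ν, hν⟩ : (nzSpec (x * y)).Nonempty := by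
    obtain ⟨w, hw⟩ := hA.exists_nzSpec_mul_nonempty hy0
    rw [← Set.encard_pos, hx]
    exact (Set.encard_pos.2 hw).trans_le (encard_nzSpec_mul_le_srank w y)
  obtain ⟨p, hp, hp0, hpt, ⟨s, hps⟩, hpν⟩ := exists_isIdempotentElem_nzSpec_mul_subset
    (hfin.of_sdiff (Set.finite_singleton 0)) hν
  refine ⟨s * x, ?_, ?_⟩
  · rwa [mul_assoc, ← hps]
  · rw [mul_assoc, ← hps]
    refine (srank_le_one_of_nzSpec_mul_subset hy hx hp hpt hps hpν).antisymm ?_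
    simpa [nzSpec_idempotent hp hp0] using encard_nzSpec_mul_le_srank 1 p

end RankOneIdempotents

section ScalarCorner

lemma spectrum_subsingleton_of_nzSpec_subsingleton {A : Type*} [Ring A] [Algebra ℂ A]
    (h : ∀ x : A, (nzSpec x).Subsingleton) (x : A) : (spectrum ℂ x).Subsingleton := by
  intro μ hμ ν hν
  by_contra hne
  obtain ⟨c, hc⟩ := ({-μ, -ν} : Set ℂ).toFinite.exists_notMem
  rw [Set.mem_insert_iff, Set.mem_singleton_iff, not_or] at hc
  have hmem {r : ℂ} (hr : r ∈ spectrum ℂ x) (hrc : c ≠ -r) :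
      r + c ∈ nzSpec (algebraMap ℂ A c + x) :=
    ⟨spectrum.add_mem_add_iff.2 hr, fun h0 ↦ hrc (eq_neg_of_add_eq_zero_right h0)⟩
  exact hne (add_right_cancel (h _ (hmem hμ hc.1) (hmem hν hc.2)))

lemma isUnit_of_nzSpec_mul_nonempty {A : Type*} [Ring A] [Algebra ℂ A]
    (h : ∀ x : A, (spectrum ℂ x).Subsingleton) {x y : A} (hyx : (nzSpec (y * x)).Nonempty) :
    IsUnit x := by
  have key {z : A} (hz : (nzSpec z).Nonempty) : IsUnit z := by
    obtain ⟨ν, hν⟩ := hz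
    exact (spectrum.zero_notMem_iff ℂ).1 fun h0 ↦ hν.2 (h z hν.1 h0)
  obtain ⟨s, hs⟩ := (key hyx).exists_left_inv
  obtain ⟨r, hr⟩ := (key (nzSpec_mul_comm y x ▸ hyx)).exists_right_inv
  exact isUnit_iff_exists_and_exists.2
    ⟨⟨y * r, by rw [← mul_assoc, hr]⟩, s * y, by rw [mul_assoc, hs]⟩

variable {A : Type*} [NormedRing A] [NormedAlgebra ℂ A] [CompleteSpace A]

lemma exists_eq_algebraMap_of_nzSpec_subsingleton [Nontrivial A]
    (h : ∀ x : A, (nzSpec x).Subsingleton)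
    (hA : ∀ x : A, x ≠ 0 → ∃ y, (nzSpec (y * x)).Nonempty) (x : A) :
    ∃ c : ℂ, x = algebraMap ℂ A c := by
  have hunit {d : A} : IsUnit d ↔ d ≠ 0 := by
    refine ⟨IsUnit.ne_zero, fun hd ↦ ?_⟩
    obtain ⟨y, hy⟩ := hA d hd
    exact isUnit_of_nzSpec_mul_nonempty (spectrum_subsingleton_of_nzSpec_subsingleton h) hy
  obtain ⟨c, hc⟩ := spectrum.nonempty x
  exact ⟨c, (spectrum.algebraMap_eq_of_mem hunit hc).symm⟩

variable {p : A}

lemma JacobsonSemisimple.exists_mul_mul_eq_smul (hA : JacobsonSemisimple A)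
    (hp : IsIdempotentElem p) (hp1 : srank p = 1) (x : A) : ∃ c : ℂ, p * x * p = c • p := by
  have : Nontrivial hp.Corner :=
    ⟨1, 0, fun h ↦ ne_zero_of_srank_eq_one hp1 <| by simpa using congrArg (cornerVal hp) h⟩
  have hsub (a : hp.Corner) : (nzSpec a).Subsingleton := by
    rw [← Set.encard_le_one_iff_subsingleton, ← nzSpec_cornerVal, ← cornerVal_mul, ← hp1]
    exact encard_nzSpec_mul_le_srank _ p
  have hne (a : hp.Corner) (ha : a ≠ 0) : ∃ b, (nzSpec (b * a)).Nonempty := by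
    obtain ⟨y, hy⟩ := hA.exists_nzSpec_mul_nonempty
      ((map_ne_zero_iff _ (cornerVal_injective hp)).2 ha)
    refine ⟨compress hp y, ?_⟩
    rwa [← nzSpec_cornerVal, map_mul, cornerVal_compress, mul_assoc, mul_cornerVal, mul_assoc,
      nzSpec_mul_comm, mul_assoc, cornerVal_mul]
  obtain ⟨c, hc⟩ := exists_eq_algebraMap_of_nzSpec_subsingleton hsub hne (compress hp x)
  exact ⟨c, by simpa [cornerVal_algebraMap] using congrArg (cornerVal hp) hc⟩

end ScalarCorner

section Resolvent

lemma mem_nzSpec_resolvent_mul_iff {A : Type*} [Ring A] [Algebra ℂ A] {a : A} {μ c : ℂ}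
    (hμ : μ ∈ resolventSet ℂ a) (hc : c ≠ 0) (x : A) :
    c ∈ nzSpec (resolvent a μ * x) ↔ μ ∈ spectrum ℂ (a + c⁻¹ • x) := by
  have hfactor : (algebraMap ℂ A μ - a) * (algebraMap ℂ A c - resolvent a μ * x) =
      algebraMap ℂ A c * (algebraMap ℂ A μ - (a + c⁻¹ • x)) := by
    rw [mul_sub, ← mul_assoc, resolvent, Ring.mul_inverse_cancel _ hμ, one_mul,
      ← Algebra.commutes, ← sub_sub, mul_sub (algebraMap ℂ A c) _ (c⁻¹ • x),
      mul_sub, ← Algebra.smul_def c (c⁻¹ • x),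
      smul_inv_smul₀ hc]
  have hcA : IsUnit (algebraMap ℂ A c) := hc.isUnit.map _
  rw [mem_nzSpec, and_iff_left hc, spectrum.mem_iff, not_iff_not]
  lift algebraMap ℂ A μ - a to Aˣ using hμ with u
  lift algebraMap ℂ A c to Aˣ using hcA with v
  rw [← u.isUnit_units_mul, hfactor, v.isUnit_units_mul]

lemma nzSpec_resolvent_mul_eq {A : Type*} [Ring A] [Algebra ℂ A] {a b x : A} {μ : ℂ}
    (h : ∀ κ : ℂ, κ ≠ 0 → spectrum ℂ (a + κ • x) = spectrum ℂ (b + κ • x))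
    (ha : μ ∈ resolventSet ℂ a) (hb : μ ∈ resolventSet ℂ b) :
    nzSpec (resolvent a μ * x) = nzSpec (resolvent b μ * x) := by
  ext c
  obtain rfl | hc := eq_or_ne c 0
  · simp [mem_nzSpec]
  · rw [mem_nzSpec_resolvent_mul_iff ha hc, mem_nzSpec_resolvent_mul_iff hb hc,
      h _ (inv_ne_zero hc)]

variable {𝕜 A : Type*} [NontriviallyNormedField 𝕜] [NormedRing A] [NormedAlgebra 𝕜 A]
  [CompleteSpace A]

open Bornology Filter Topology

lemma eventually_mem_resolventSet (a : A) : ∀ᶠ μ in cobounded 𝕜, μ ∈ resolventSet 𝕜 a := by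
  simpa only [spectrum.isUnit_resolvent] using spectrum.eventually_isUnit_resolvent a

lemma tendsto_smul_resolvent_cobounded (a : A) :
    Tendsto (fun μ : 𝕜 ↦ μ • resolvent a μ) (cobounded 𝕜) (𝓝 1) := by
  have hlim : Tendsto (fun μ : 𝕜 ↦ 1 + a * resolvent a μ) (cobounded 𝕜) (𝓝 1) := by
    simpa using ((spectrum.resolvent_tendsto_cobounded a).const_mul a).const_add 1
  refine hlim.congr' ?_
  filter_upwards [eventually_mem_resolventSet a] with μ hμ
  rw [← Ring.mul_inverse_cancel _ hμ, resolvent, ← add_mul, sub_add_cancel, Algebra.smul_def]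

lemma map_eq_map_of_eventually_resolvent {E : Type*} [NormedAddCommGroup E] [NormedSpace 𝕜 E]
    {a b : A} (φ : A →L[𝕜] E)
    (h : ∀ᶠ μ in cobounded 𝕜, φ (resolvent a μ) = φ (resolvent b μ)) : φ a = φ b := by
  have hlim : Tendsto (fun μ : 𝕜 ↦ φ (μ • resolvent a μ * (a - b) * μ • resolvent b μ))
      (cobounded 𝕜) (𝓝 (φ (a - b))) := by
    refine (φ.continuous.tendsto _).comp ?_
    simpa using ((tendsto_smul_resolvent_cobounded a).mul_const (a - b)).mul
      (tendsto_smul_resolvent_cobounded b)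
  have hzero : ∀ᶠ μ in cobounded 𝕜,
      φ (μ • resolvent a μ * (a - b) * μ • resolvent b μ) = 0 := by
    filter_upwards [h, eventually_mem_resolventSet a, eventually_mem_resolventSet b]
      with μ hμ ha hb
    rw [smul_mul_assoc, smul_mul_smul_comm, ← spectrum.resolvent_sub_resolvent ha hb, map_smul,
      map_sub, hμ, sub_self, smul_zero]
  rw [← sub_eq_zero, ← map_sub]
  exact tendsto_nhds_unique hlim (tendsto_const_nhds.congr' (hzero.mono fun _ ↦ Eq.symm))

end Resolvent

section Uniqueness

lemma eq_of_singleton_sdiff_eq {α : Type*} {a b c : α} (h : ({a} \ {c} : Set α) = {b} \ {c}) :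
    a = b := by
  have ha := Set.ext_iff.1 h a
  have hb := Set.ext_iff.1 h b
  grind

variable {A : Type*} [NormedRing A] [NormedAlgebra ℂ A] [CompleteSpace A] {a b : A}

lemma exists_srank_eq_one_nzSpec_mul_eq (hA : JacobsonSemisimple A)
    (hann : LeftAnnSocleTrivial A) {c : A} (hc : c ≠ 0) :
    ∃ (x : A) (φ : A →L[ℂ] ℂ), srank x = 1 ∧ (∀ m, nzSpec (m * x) = {φ m} \ {0}) ∧ φ c ≠ 0 := by
  obtain ⟨y, hy, hcy⟩ : ∃ y ∈ socle A, c * y ≠ 0 := by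
    by_contra! h
    exact hc (hann.subset h)
  obtain ⟨z, hp, hp1⟩ := hA.exists_isIdempotentElem_srank_eq_one
    (ne_top_of_le_ne_top hy (srank_mul_left_le c y)) hcy
  set p := z * (c * y) with hpdef
  have hp0 : p ≠ 0 := ne_zero_of_srank_eq_one hp1
  obtain ⟨f, hf⟩ := SeparatingDual.exists_eq_one (R := ℂ) hp0
  let φ : A →L[ℂ] ℂ := f ∘L ContinuousLinearMap.mulLeftRight ℂ A (p * z) (y * p)
  have hφ (m : A) : p * (z * m * y) * p = φ m • p := by
    obtain ⟨κ, hκ⟩ := hA.exists_mul_mul_eq_smul hp hp1 (z * m * y)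
    have hφκ : φ m = κ := by
      calc φ m = f (p * (z * m * y) * p) := by simp [φ, mul_assoc]
        _ = κ := by simp [hκ, hf]
    rw [hκ, hφκ]
  have hnz (m : A) : nzSpec (m * (y * p * z)) = {φ m} \ {0} := by
    calc nzSpec (m * (y * p * z)) = nzSpec (z * (m * y * p)) := by
          rw [nzSpec_mul_comm z]
          simp only [mul_assoc]
      _ = nzSpec (z * m * y * (p * p)) := by simp only [hp.eq, mul_assoc]
      _ = nzSpec (p * (z * m * y) * p) := by rw [← mul_assoc, nzSpec_mul_comm _ p, mul_assoc p]
      _ = {φ m} \ {0} := by rw [hφ, nzSpec_smul_idempotent hp hp0]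
  have hφc : φ c = 1 := by
    have h := congrArg f (hφ c)
    rw [mul_assoc z c y, ← hpdef, hp.eq, hp.eq, map_smul, hf, smul_eq_mul, mul_one] at h
    exact h.symm
  refine ⟨y * p * z, φ, le_antisymm ?_ ?_, hnz, hφc ▸ one_ne_zero⟩
  · exact ((srank_mul_right_le _ _).trans (srank_mul_left_le _ _)).trans_eq hp1
  · simpa [hnz, hφc] using encard_nzSpec_mul_le_srank c (y * p * z)

theorem eq_of_spectrum_mul_eq (hA : JacobsonSemisimple A) (hann : LeftAnnSocleTrivial A)
    (h : ∀ x : A, srank x = 1 → spectrum ℂ (a * x) = spectrum ℂ (b * x)) : a = b := by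
  by_contra hab
  obtain ⟨x, φ, hx, hφ, hφ0⟩ := exists_srank_eq_one_nzSpec_mul_eq hA hann (sub_ne_zero.2 hab)
  have hnz : ({φ a} \ {0} : Set ℂ) = {φ b} \ {0} := by
    rw [← hφ, ← hφ, nzSpec, nzSpec, h x hx]
  exact hφ0 (by rw [map_sub, eq_of_singleton_sdiff_eq hnz, sub_self])

open Bornology in
theorem eq_of_spectrum_add_eq (hA : JacobsonSemisimple A) (hann : LeftAnnSocleTrivial A)
    (h : ∀ x : A, srank x = 1 → spectrum ℂ (a + x) = spectrum ℂ (b + x)) : a = b := by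
  by_contra hab
  obtain ⟨x, φ, hx, hφ, hφ0⟩ := exists_srank_eq_one_nzSpec_mul_eq hA hann (sub_ne_zero.2 hab)
  have hspec (κ : ℂ) (hκ : κ ≠ 0) : spectrum ℂ (a + κ • x) = spectrum ℂ (b + κ • x) :=
    h _ ((srank_smul hκ x).trans hx)
  have hres : ∀ᶠ μ in cobounded ℂ, φ (resolvent a μ) = φ (resolvent b μ) := by
    filter_upwards [eventually_mem_resolventSet a, eventually_mem_resolventSet b] with μ ha hb
    exact eq_of_singleton_sdiff_eq <| by
      rw [← hφ, ← hφ, nzSpec_resolvent_mul_eq hspec ha hb]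
  exact hφ0 (by rw [map_sub, map_eq_map_of_eventually_resolvent φ hres, sub_self])

end Uniqueness

theorem leftAnn_socle_trivial_iff_uniqueness
    {A : Type*} [NormedRing A] [NormOneClass A] [NormedAlgebra ℂ A] [CompleteSpace A]
    (hss : JacobsonSemisimple A) (hsoc : socle A ≠ {0}) :
    LeftAnnSocleTrivial A ↔
      ∀ a b : A,
        (a = b ↔ ∀ x : A, srank x = 1 → spectrum ℂ (a * x) = spectrum ℂ (b * x)) ∧
        (a = b ↔ ∀ x : A, srank x = 1 → spectrum ℂ (a + x) = spectrum ℂ (b + x)) := by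
  constructor
  · intro hann a b
    exact ⟨⟨fun h x _ ↦ by rw [h], eq_of_spectrum_mul_eq hss hann⟩,
      ⟨fun h x _ ↦ by rw [h], eq_of_spectrum_add_eq hss hann⟩⟩
  · refine fun h ↦ Set.eq_singleton_iff_unique_mem.2 ⟨fun y _ ↦ zero_mul y, fun c hc ↦ ?_⟩
    refine (h c 0).1.2 fun x hx ↦ ?_
    have hx_socle : x ∈ socle A := hx.trans_ne ENat.one_ne_top
    rw [hc x hx_socle, zero_mul]
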